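/- arXiv:2401.05938 — 3 statements merged into one kernel-verified Lean document; each statement's English description precedes it below -/
import Mathlib

section
/- For every fixed integers k ≥ 2 and ℓ ≥ 3, there are only finitely many k-dicritical digraphs that contain no oriented cycle on at least ℓ vertices (i.e., whose underlying undirected graph has no cycle of length at least ℓ). -/
/-- A directed cycle of `A` within the set `s`, given by its first vertex `v`
and the list `l` of remaining vertices. Its length (number of vertices/arcs)
is `(v :: l).length`. -/
def IsCycleOn {V : Type} (A : V → V → Prop) (s : Set V) (v : V) (l : List V) : Prop :=
  (∀ x ∈ v :: l, x ∈ s) ∧ (v :: l).Nodup ∧ List.Chain A v (l ++ [v])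

/-- `D[s]` admits a `k`-dicolouring: a colouring with no monochromatic directed cycle. -/
def DicolorableOn {V : Type} (A : V → V → Prop) (s : Set V) (k : ℕ) : Prop :=
  ∃ φ : V → Fin k, ∀ v l, IsCycleOn A s v l → ¬ (∀ x ∈ v :: l, φ x = φ v)

/-- `D[s]` is `k`-dicritical: its dichromatic number is `k` (not `(k-1)`-dicolourable but
`k`-dicolourable) and removing any vertex or any arc makes it `(k-1)`-dicolourable. -/
def Dicritical {V : Type} (A : V → V → Prop) (s : Set V) (k : ℕ) : Prop :=
  ¬ DicolorableOn A s (k - 1) ∧ DicolorableOn A s k ∧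
  (∀ v ∈ s, DicolorableOn A (s \ {v}) (k - 1)) ∧
  (∀ a b, a ∈ s → b ∈ s → A a b →
    DicolorableOn (fun x y => A x y ∧ ¬(x = a ∧ y = b)) s (k - 1))

/-- An oriented cycle: a cycle of the underlying undirected graph of the digraph `A`,
given by its vertices `v :: l` (pairwise distinct, at least 3, consecutively adjacent
in the underlying graph, cyclically). -/
def IsOrientedCycle {V : Type} (A : V → V → Prop) (v : V) (l : List V) : Prop :=
  (v :: l).Nodup ∧ List.Chain (fun a b => A a b ∨ A b a) v (l ++ [v]) ∧
    3 ≤ (v :: l).length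

theorem exists_nodup_closed_chain {V : Type*} {R : V → V → Prop} :
    ∀ (m : ℕ) (v : V) (l : List V), l.length ≤ m → List.IsChain R (v :: l ++ [v]) →
      ∃ w l', (w :: l').Nodup ∧ List.IsChain R (w :: l' ++ [w]) := by
  intro m
  induction m with
  | zero =>
    intro v l hl h
    obtain rfl : l = [] := by simpa using hl
    exact ⟨v, [], by simp, h⟩
  | succ m ih =>
    intro v l hl h
    by_cases hn : (v :: l).Nodup
    · exact ⟨v, l, hn, h⟩
    · obtain ⟨a, p, q, r, hpq⟩ : ∃ a p q r, v :: l = p ++ a :: q ++ a :: r := by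
        rw [List.nodup_cons, not_and_or, not_not] at hn
        by_contra hcon
        have : (v :: l).Nodup := by
          rw [List.nodup_iff_sublist]
          intro a ha
          apply hcon
          obtain ⟨r₁, r₂, h1, h2, h3⟩ := List.cons_sublist_iff.1 ha
          obtain ⟨p, q, rfl⟩ := List.append_of_mem h2
          obtain ⟨q', r, rfl⟩ := List.append_of_mem (List.singleton_sublist.1 h3)
          exact ⟨a, p, q ++ q', r, by simp [h1]⟩
        rw [List.nodup_cons] at this
        tauto
      apply ih a q
      · have := congrArg List.length hpq
        simp at this
        omega
      · have e : v :: l ++ [v] = p ++ (a :: q ++ [a] ++ (r ++ [v])) := by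
          rw [hpq]
          simp
        rw [e] at h
        exact h.right_of_append.left_of_append

theorem DicolorableOn.exists_acyclic {V : Type} {A : V → V → Prop} {s : Set V} {k : ℕ}
    (h : DicolorableOn A s k) :
    ∃ φ : V → Fin k, ∀ v,
      ¬ Relation.TransGen (fun x y => A x y ∧ x ∈ s ∧ y ∈ s ∧ φ x = φ y) v v := by
  obtain ⟨φ, hφ⟩ := h
  refine ⟨φ, fun v hv => ?_⟩
  obtain ⟨w, l, hn, hc⟩ : ∃ w l, (w :: l).Nodup ∧
      List.IsChain (fun x y => A x y ∧ x ∈ s ∧ y ∈ s ∧ φ x = φ y) (w :: l ++ [w]) := by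
    rw [Relation.TransGen.tail'_iff] at hv
    obtain ⟨b, hb, hbv⟩ := hv
    obtain ⟨l, hl, hlast⟩ := List.exists_isChain_cons_of_relationReflTransGen hb
    refine exists_nodup_closed_chain _ v l le_rfl ?_
    rw [List.isChain_append]
    refine ⟨hl, by simp, ?_⟩
    intro x hx y hy
    rw [List.getLast?_eq_getLast_of_ne_nil (by simp), hlast] at hx
    simp at hx hy
    subst hx hy
    exact hbv
  have hpw : ∀ x ∈ w :: l, x ∈ s ∧ φ x = φ w := by
    have key : ∀ (l : List V) (w' : V),
        List.IsChain (fun x y => A x y ∧ x ∈ s ∧ y ∈ s ∧ φ x = φ y) (w' :: l ++ [w]) →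
        ∀ x ∈ w' :: l, x ∈ s ∧ φ x = φ w := by
      intro l
      induction l with
      | nil => intro w' h; simp at h ⊢; tauto
      | cons a l ih =>
        intro w' h
        rw [List.cons_append, List.cons_append, List.isChain_cons_cons] at h
        have := ih a h.2
        have h1 := this a (by simp)
        intro x hx
        rcases List.mem_cons.1 hx with rfl | hx
        · exact ⟨h.1.2.1, h.1.2.2.2.trans h1.2⟩
        · exact this x hx
    exact key l w hc
  exact hφ w l ⟨fun x hx => (hpw x hx).1, hn, hc.imp fun _ _ h => h.1⟩ fun x hx => (hpw x hx).2

theorem DicolorableOn.of_acyclic {V : Type} {A : V → V → Prop} {s : Set V} {k : ℕ}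
    (φ : V → Fin k) (h : ∀ v,
      ¬ Relation.TransGen (fun x y => A x y ∧ x ∈ s ∧ y ∈ s ∧ φ x = φ y) v v) :
    DicolorableOn A s k := by
  refine ⟨φ, fun v l ⟨hs, _, hc⟩ hm => h v ?_⟩
  have key : ∀ (l : List V) (w : V), (∀ x ∈ w :: l, x ∈ s ∧ φ x = φ v) →
      List.IsChain A (w :: l ++ [v]) →
      Relation.TransGen (fun x y => A x y ∧ x ∈ s ∧ y ∈ s ∧ φ x = φ y) w v := by
    intro l
    induction l with
    | nil =>
      intro w hw hc
      have := hw w (by simp)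
      exact .single ⟨by simpa using hc, this.1, hs v (by simp), this.2⟩
    | cons a l ih =>
      intro w hw hc
      rw [List.cons_append, List.cons_append, List.isChain_cons_cons] at hc
      have h1 := hw w (by simp)
      have h2 := hw a (by simp)
      exact .head ⟨hc.1, h1.1, h2.1, h1.2.trans h2.2.symm⟩
        (ih a (fun x hx => hw x (by simp_all)) hc.2)
  exact key l v (fun x hx => ⟨hs x hx, hm x hx⟩) hc

/-- Every endomorphism of a dicritical digraph is surjective. -/
theorem Dicritical.surjective_of_hom {V : Type} {A : V → V → Prop} {k : ℕ}
    (h : Dicritical A Set.univ k) (f : V → V) (hf : ∀ a b, A a b → A (f a) (f b)) :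
    Function.Surjective f := by
  by_contra hcon
  simp only [Function.Surjective, not_forall, not_exists] at hcon
  obtain ⟨v, hv⟩ := hcon
  obtain ⟨φ, hφ⟩ := (h.2.2.1 v (Set.mem_univ v)).exists_acyclic
  refine h.1 (.of_acyclic (φ ∘ f) fun w hw => hφ (f w) ?_)
  exact hw.lift f fun a b hab => ⟨hf a b hab.1, by simpa using hv a, by simpa using hv b, hab.2.2.2⟩

/-- A dicritical digraph has no cut vertex. -/
theorem Dicritical.reflTransGen_avoiding {V : Type} {A : V → V → Prop} {k : ℕ}
    (h : Dicritical A Set.univ k) {x y z : V} (hx : x ≠ y) (hz : z ≠ y) :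
    Relation.ReflTransGen (fun a b => (A a b ∨ A b a) ∧ a ≠ y ∧ b ≠ y) z x := by
  classical
  by_contra hcon
  set S : Set V :=
    {v | Relation.ReflTransGen (fun a b => (A a b ∨ A b a) ∧ a ≠ y ∧ b ≠ y) z v} with hS
  have hzS : z ∈ S := Relation.ReflTransGen.refl
  have hyS : y ∉ S := by
    intro hy
    rcases Relation.ReflTransGen.cases_tail hy with hy | ⟨b, _, hb⟩
    · exact hz hy.symm
    · exact hb.2.2 rfl
  have hcl : ∀ a b, a ∈ S → (A a b ∨ A b a) → b ≠ y → b ∈ S := fun a b ha hab hb =>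
    Relation.ReflTransGen.tail ha ⟨hab, fun e => hyS (e ▸ ha), hb⟩
  obtain ⟨φ₁, h₁⟩ := (h.2.2.1 x (Set.mem_univ x)).exists_acyclic
  obtain ⟨φ₂, h₂⟩ := (h.2.2.1 z (Set.mem_univ z)).exists_acyclic
  set σ := Equiv.swap (φ₂ y) (φ₁ y) with hσ
  have hσy : σ (φ₂ y) = φ₁ y := Equiv.swap_apply_left _ _
  set φ : V → Fin (k - 1) := fun v => if v ∈ S then φ₁ v else σ (φ₂ v) with hφ
  have hφ1 : ∀ v, v ∈ S ∨ v = y → φ v = φ₁ v := by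
    rintro v (hv | rfl)
    · simp [hφ, hv]
    · simp [hφ, hyS, hσy]
  have hφ2 : ∀ v, v ∉ S → φ v = σ (φ₂ v) := fun v hv => by simp [hφ, hv]
  set R₁ := fun a b => A a b ∧ a ∈ Set.univ \ {x} ∧ b ∈ Set.univ \ {x} ∧ φ₁ a = φ₁ b
  set R₂ := fun a b => A a b ∧ a ∈ Set.univ \ {z} ∧ b ∈ Set.univ \ {z} ∧ φ₂ a = φ₂ b
  have hR₁ : ∀ a b, A a b → φ a = φ b → (a ∈ S ∨ a = y) → (b ∈ S ∨ b = y) → R₁ a b := by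
    intro a b hab hc ha hb
    refine ⟨hab, ?_, ?_, by rw [← hφ1 a ha, ← hφ1 b hb, hc]⟩
    · refine ⟨Set.mem_univ _, ?_⟩; rintro rfl; rcases ha with ha | ha
      exacts [hcon ha, hx ha]
    · refine ⟨Set.mem_univ _, ?_⟩; rintro rfl; rcases hb with hb | hb
      exacts [hcon hb, hx hb]
  have hR₂ : ∀ a b, A a b → φ a = φ b → a ∉ S → b ∉ S → R₂ a b := by
    intro a b hab hc ha hb
    refine ⟨hab, ?_, ?_, by rw [hφ2 a ha, hφ2 b hb] at hc; exact σ.injective hc⟩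
    · exact ⟨Set.mem_univ _, by rintro rfl; exact ha hzS⟩
    · exact ⟨Set.mem_univ _, by rintro rfl; exact hb hzS⟩
  refine h.1 (.of_acyclic φ fun v hv => ?_)
  have key1 : ∀ a b, (a ∈ S ∨ a = y) → Relation.TransGen
      (fun a b => A a b ∧ a ∈ Set.univ ∧ b ∈ Set.univ ∧ φ a = φ b) a b →
      ((b ∈ S ∨ b = y) ∧ Relation.TransGen R₁ a b) ∨
      ((b ∉ S ∧ b ≠ y) ∧ Relation.ReflTransGen R₁ a y ∧ Relation.TransGen R₂ y b) := by
    intro a b ha hab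
    induction hab with
    | @single b hb =>
      by_cases hbS : b ∈ S ∨ b = y
      · exact .inl ⟨hbS, .single (hR₁ _ _ hb.1 hb.2.2.2 ha hbS)⟩
      · have : a = y := by grind
        subst this
        exact .inr ⟨by tauto, .refl, .single (hR₂ _ _ hb.1 hb.2.2.2 hyS (by tauto))⟩
    | @tail b c hab hc ih =>
      rcases ih with ⟨hb, h1⟩ | ⟨hb, h1, h2⟩
      · by_cases hcS : c ∈ S ∨ c = y
        · exact .inl ⟨hcS, .tail h1 (hR₁ _ _ hc.1 hc.2.2.2 hb hcS)⟩
        · have : b = y := by grind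
          subst this
          exact .inr ⟨by tauto, h1.to_reflTransGen,
            .single (hR₂ _ _ hc.1 hc.2.2.2 hyS (by tauto))⟩
      · have hcS : c ∉ S := fun hcS => hb.1 (hcl c b hcS (.inr hc.1) hb.2)
        have h3 := h2.tail (hR₂ _ _ hc.1 hc.2.2.2 hb.1 hcS)
        by_cases hcy : c = y
        · subst hcy; exact (h₂ _ h3).elim
        · exact .inr ⟨⟨hcS, hcy⟩, h1, h3⟩
  have key2 : ∀ a b, (a ∉ S) → Relation.TransGen
      (fun a b => A a b ∧ a ∈ Set.univ ∧ b ∈ Set.univ ∧ φ a = φ b) a b →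
      (b ∉ S ∧ Relation.TransGen R₂ a b) ∨
      (b ∈ S ∧ Relation.ReflTransGen R₂ a y ∧ Relation.TransGen R₁ y b) := by
    intro a b ha hab
    induction hab with
    | @single b hb =>
      by_cases hbS : b ∉ S
      · exact .inl ⟨hbS, .single (hR₂ _ _ hb.1 hb.2.2.2 ha hbS)⟩
      · have : a = y := by grind
        subst this
        exact .inr ⟨by tauto, .refl, .single (hR₁ _ _ hb.1 hb.2.2.2 (.inr rfl) (by tauto))⟩
    | @tail b c hab hc ih =>
      rcases ih with ⟨hb, h1⟩ | ⟨hb, h1, h2⟩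
      · by_cases hcS : c ∉ S
        · exact .inl ⟨hcS, .tail h1 (hR₂ _ _ hc.1 hc.2.2.2 hb hcS)⟩
        · have : b = y := by grind
          subst this
          exact .inr ⟨by tauto, h1.to_reflTransGen,
            .single (hR₁ _ _ hc.1 hc.2.2.2 (.inr rfl) (by tauto))⟩
      · have hcS : c ∈ S ∨ c = y := by
          by_cases hcy : c = y
          · exact .inr hcy
          · exact .inl (hcl b c hb (.inl hc.1) hcy)
        have h3 := h2.tail (hR₁ _ _ hc.1 hc.2.2.2 (.inl hb) hcS)
        rcases hcS with hcS | rfl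
        · exact .inr ⟨hcS, h1, h3⟩
        · exact (h₁ _ h3).elim
  by_cases hvS : v ∈ S
  · rcases key1 v v (.inl hvS) hv with h | h
    · exact h₁ _ h.2
    · exact h.1.1 hvS
  · rcases key2 v v hvS hv with h | h
    · exact h₂ _ h.2
    · exact hvS h.1

theorem reflTransGen_symm {V : Type*} {R : V → V → Prop} (hR : ∀ a b, R a b → R b a) {a b : V}
    (h : Relation.ReflTransGen R a b) : Relation.ReflTransGen R b a := by
  induction h with
  | refl => exact .refl
  | tail _ hbc ih => exact ih.head (hR _ _ hbc)

/-- A path, written backwards, from `z` to the first vertex of `S` on a walk from `z` to `x`. -/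
theorem exists_path_to_set {V : Type*} {R : V → V → Prop} {S Q : V → Prop}
    (hsymm : ∀ a b, R a b → R b a) (hQ : ∀ a b, R a b → Q a) {x : V} (hxS : S x) (hxQ : Q x)
    {z : V} (h : Relation.ReflTransGen R z x) :
    ∃ (w : V) (q : List V), S w ∧ q.head? = some w ∧ q.getLast? = some z ∧ q.IsChain R ∧ q.Nodup ∧
      (∀ v ∈ q, Q v) ∧ ∀ v ∈ q, S v → v = w := by
  classical
  induction h using Relation.ReflTransGen.head_induction_on with
  | refl => exact ⟨x, [x], hxS, by simp, by simp, by simp, by simp, by simpa, by simp⟩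
  | @head z z' hz h ih =>
    by_cases hzS : S z
    · exact ⟨z, [z], hzS, by simp, by simp, by simp, by simp, by simpa using hQ _ _ hz, by simp⟩
    obtain ⟨w, q, hw, hhead, hlast, hc, hn, hq, hS⟩ := ih
    by_cases hzq : z ∈ q
    · obtain ⟨s, t, rfl⟩ := List.append_of_mem hzq
      have hpre : s ++ [z] <+: s ++ z :: t := ⟨t, by simp⟩
      refine ⟨w, s ++ [z], hw, ?_, by simp, List.IsChain.left_of_append (l₂ := t) (by simpa using hc),
        hn.sublist hpre.sublist,
        fun v hv => hq v (hpre.subset hv), fun v hv => hS v (hpre.subset hv)⟩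
      cases s <;> simpa using hhead
    · refine ⟨w, q ++ [z], hw, by simp [hhead], by simp, ?_, ?_, ?_, ?_⟩
      · rw [List.isChain_append]
        refine ⟨hc, by simp, fun a ha b hb => ?_⟩
        rw [hlast] at ha
        simp at ha hb
        subst ha hb
        exact hsymm _ _ hz
      · rw [List.nodup_append]
        grind
      · have := hQ _ _ hz
        grind
      · grind

/-- In a graph without cut vertices, any two vertices are joined by two internally disjoint
paths. -/
theorem exists_two_disjoint_paths {V : Type*} {E : V → V → Prop} (hsymm : ∀ a b, E a b → E b a)
    (hirr : ∀ a, ¬ E a a)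
    (hcut : ∀ x y z, x ≠ y → z ≠ y →
      Relation.ReflTransGen (fun a b => E a b ∧ a ≠ y ∧ b ≠ y) z x)
    {x y : V} (h : Relation.ReflTransGen E x y) :
    y = x ∨ ∃ l₁ l₂, List.IsChain E (x :: l₁ ++ [y]) ∧ List.IsChain E (x :: l₂ ++ [y]) ∧
      (x :: y :: (l₁ ++ l₂)).Nodup := by
  induction h with
  | refl => exact .inl rfl
  | @tail y z _ hyz ih =>
    by_cases hzx : z = x
    · exact .inl hzx
    right
    rcases ih with rfl | ⟨l₁, l₂, h₁, h₂, hn⟩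
    · exact ⟨[], [], by simpa, by simpa, by simpa using Ne.symm hzx⟩
    have hxy : x ≠ y := by rintro rfl; simp at hn
    have hzy : z ≠ y := by rintro rfl; exact hirr _ hyz
    obtain ⟨w, q, hw, hhead, hlast, hc, hqn, hq, hS⟩ :=
      exists_path_to_set (S := fun v => v ∈ x :: (l₁ ++ l₂)) (Q := fun v => v ≠ y)
        (fun a b h => ⟨hsymm _ _ h.1, h.2.2, h.2.1⟩) (fun a b h => h.2.1)
        (by simp) hxy (hcut x y z hxy hzy)
    have hcE : q.IsChain E := hc.imp fun _ _ h => h.1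
    have key : ∀ l₁ l₂, List.IsChain E (x :: l₁ ++ [y]) → List.IsChain E (x :: l₂ ++ [y]) →
        (x :: y :: (l₁ ++ l₂)).Nodup → (∀ v ∈ q, v ∈ x :: (l₁ ++ l₂) → v = w) → w ∈ x :: l₁ →
        ∃ l₁ l₂, List.IsChain E (x :: l₁ ++ [z]) ∧ List.IsChain E (x :: l₂ ++ [z]) ∧
          (x :: z :: (l₁ ++ l₂)).Nodup := by
      intro l₁ l₂ h₁ h₂ hn hS hw
      obtain ⟨a, b, hab⟩ := List.append_of_mem hw
      obtain ⟨q', rfl⟩ : ∃ q', q = q' ++ [z] := by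
        obtain ⟨q', hq'⟩ := List.getLast?_eq_some_iff.1 hlast
        exact ⟨q', hq'⟩
      have hchain : List.IsChain E (a ++ (q' ++ [z])) := by
        have h3 : List.IsChain E (a ++ [w]) := by
          have e : x :: l₁ ++ [y] = a ++ [w] ++ (b ++ [y]) := by rw [hab]; simp
          rw [e] at h₁
          exact h₁.left_of_append
        rw [List.isChain_append] at h3 ⊢
        refine ⟨h3.1, hcE, fun u hu v hv => h3.2.2 u hu v ?_⟩
        rw [hhead] at hv
        simpa using hv
      obtain ⟨l, hl⟩ : ∃ l, a ++ q' = x :: l := by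
        cases a with
        | nil =>
          cases q' with
          | nil => simp at hhead hab; grind
          | cons c q' => simp at hhead hab; exact ⟨q', by simp [hhead, hab.1]⟩
        | cons c a => simp at hab; exact ⟨a ++ q', by simp [hab.1]⟩
      refine ⟨l, l₂ ++ [y], ?_, ?_, ?_⟩
      · rw [← hl]; simpa using hchain
      · have e : x :: (l₂ ++ [y]) ++ [z] = (x :: l₂) ++ y :: [z] := by simp
        rw [e, List.isChain_split]
        exact ⟨h₂, by simpa using hyz⟩
      · have hab' : (a ++ w :: b ++ (y :: l₂)).Nodup := by
          rw [← hab]; simp at hn ⊢; grind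
        have hperm : (x :: z :: (l ++ (l₂ ++ [y]))).Perm ((a ++ (q' ++ [z])) ++ (y :: l₂)) := by
          have : (x :: z :: (l ++ (l₂ ++ [y]))).Perm (x :: l ++ ([z] ++ (y :: l₂))) := by
            simp only [List.cons_append, List.perm_cons, List.nil_append]
            exact (List.perm_middle.symm).trans
              (((List.perm_append_singleton y l₂).cons z).append_left l)
          rw [← hl] at this
          simpa using this
        rw [hperm.nodup_iff, List.nodup_append, List.nodup_append]
        have hmem : ∀ v, v ∈ x :: l₁ ↔ v ∈ a ++ w :: b := by rw [hab]; simp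
        simp only [List.mem_append, List.mem_cons] at hmem hS hq
        rw [List.nodup_append, List.nodup_append] at hab'
        refine ⟨⟨hab'.1.1, hqn, ?_⟩, hab'.2.1, ?_⟩ <;> grind
    by_cases hw1 : w ∈ x :: l₁
    · exact key l₁ l₂ h₁ h₂ hn hS hw1
    · exact key l₂ l₁ h₂ h₁ 
        (((List.perm_append_comm.cons y).cons x).nodup_iff.1 hn)
        (fun v hv hv' => hS v hv (by simp only [List.mem_cons, List.mem_append] at hv' ⊢; tauto))
        (by simp only [List.mem_cons, List.mem_append] at hw hw1 ⊢; tauto)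

/-- A list whose first and last elements satisfy `p` and in which the gaps between elements
satisfying `p` have length at most `g`. -/
theorem length_le_countP_mul {V : Type*} (p : V → Bool) (g : ℕ) :
    ∀ (m : ℕ) (u : V) (t : List V), t.length ≤ m → p u →
      (∀ y ∈ (u :: t).getLast?, p y) →
      (∀ a s b, a :: s ++ [b] <:+: u :: t → p a → p b → (∀ v ∈ s, ¬ p v) → s.length ≤ g) →
      (u :: t).length ≤ (u :: t).countP p * (g + 1) := by
  intro m
  induction m with
  | zero =>
    intro u t ht hu _ _
    obtain rfl : t = [] := by simpa using ht
    simp [hu]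
  | succ m ih =>
    intro u t ht hu hlast hgap
    by_cases ht0 : t = []
    · subst ht0; simp [hu]
    obtain ⟨s, w, t', rfl, hs, hw⟩ : ∃ s w t', t = s ++ w :: t' ∧ (∀ v ∈ s, ¬ p v) ∧ p w := by
      have hy : p (t.getLast ht0) := hlast _ (by
        rw [List.getLast?_cons, List.getLast?_eq_getLast_of_ne_nil ht0]; simp)
      have hsome : (t.find? p).isSome := by
        rw [List.find?_isSome]; exact ⟨_, List.getLast_mem ht0, hy⟩
      obtain ⟨w, hw⟩ := Option.isSome_iff_exists.1 hsome
      obtain ⟨h1, s, t', h2, h3⟩ := List.find?_eq_some_iff_append.1 hw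
      exact ⟨s, w, t', h2, by simpa using h3, h1⟩
    have h1 := ih w t' (by simp at ht; omega) hw
      (fun y hy => hlast y (by rw [← List.cons_append, List.getLast?_append]; simp_all))
      (fun a s' b h => hgap a s' b (h.trans ⟨u :: s, [], by simp⟩))
    have h2 := hgap u s w ⟨[], t', by simp⟩ hu hw hs
    have h3 : (u :: (s ++ w :: t')).countP p = 1 + (w :: t').countP p := by
      rw [List.countP_cons, List.countP_append, List.countP_eq_zero.2 hs]
      simp [hu]; omega
    rw [h3, add_mul]
    simp at h1 ⊢
    omega

theorem reflTransGen_of_isChain {V : Type*} {E : V → V → Prop} {C : V → Prop}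
    (hsymm : ∀ a b, E a b → E b a) :
    ∀ (l : List V) (x : V), List.IsChain E (x :: l) → (∀ v ∈ x :: l, C v) →
      ∀ v ∈ x :: l, Relation.ReflTransGen (fun a b => E a b ∧ C a ∧ C b) v x := by
  intro l
  induction l with
  | nil => intro x _ _ v hv; simp at hv; subst hv; exact .refl
  | cons a l ih =>
    intro x hc hC v hv
    rcases List.mem_cons.1 hv with rfl | hv
    · exact .refl
    · rw [List.isChain_cons_cons] at hc
      exact (ih a hc.2 (fun v hv => hC v (by simp_all)) v hv).tail
        ⟨hsymm _ _ hc.1, hC a (by simp), hC x (by simp)⟩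

/-- In a graph without cut vertices and without cycles on at least `ℓ` vertices, paths have
bounded length. -/
theorem path_length_le {V : Type*} {E : V → V → Prop} {ℓ : ℕ} (hl : 3 ≤ ℓ)
    (hsymm : ∀ a b, E a b → E b a) (hirr : ∀ a, ¬ E a a)
    (hcut : ∀ x y z, x ≠ y → z ≠ y →
      Relation.ReflTransGen (fun a b => E a b ∧ a ≠ y ∧ b ≠ y) z x)
    (hcyc : ∀ v l, (v :: l).Nodup → List.IsChain E (v :: l ++ [v]) → 3 ≤ (v :: l).length →
      (v :: l).length < ℓ)
    (x : V) (l : List V) (hn : (x :: l).Nodup) (hc : List.IsChain E (x :: l)) :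
    (x :: l).length ≤ ℓ * ℓ := by
  classical
  obtain ⟨y, hy⟩ : ∃ y, (x :: l).getLast? = some y :=
    ⟨(x :: l).getLast (by simp), List.getLast?_eq_getLast_of_ne_nil _⟩
  have hyl : y ∈ x :: l := List.mem_of_getLast? hy
  have hxy : Relation.ReflTransGen E y x :=
    (reflTransGen_of_isChain (C := fun _ => True) hsymm l x hc (by simp) y hyl).lift id
      fun _ _ h => h.1
  have hyx : Relation.ReflTransGen E x y := reflTransGen_symm hsymm hxy
  rcases exists_two_disjoint_paths hsymm hirr hcut hyx with rfl | ⟨l₁, l₂, h₁, h₂, hn₁₂⟩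
  · cases l with
    | nil => simp; nlinarith
    | cons a l =>
      exfalso
      rw [List.getLast?_cons_cons] at hy
      exact (List.nodup_cons.1 hn).1 (List.mem_of_getLast? hy)
  set c := x :: y :: (l₁ ++ l₂) with hcdef
  have hclen : c.length < ℓ := by
    by_cases h3 : 3 ≤ c.length
    · have hperm : (x :: (l₁ ++ y :: l₂.reverse)).Perm c := by
        refine List.Perm.cons _ (List.perm_middle.trans (List.Perm.cons _ ?_))
        exact (List.reverse_perm l₂).append_left l₁
      have := hcyc x (l₁ ++ y :: l₂.reverse) (hperm.nodup_iff.2 hn₁₂) ?_ (by rwa [hperm.length_eq])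
      · rwa [hperm.length_eq] at this
      · have h2' : List.IsChain E (y :: (l₂.reverse ++ [x])) := by
          have := List.isChain_reverse.2 (h₂.imp (S := fun a b => E b a) fun a b h => hsymm _ _ h)
          simpa using this
        have : x :: (l₁ ++ y :: l₂.reverse) ++ [x] = (x :: l₁) ++ y :: (l₂.reverse ++ [x]) := by
          simp
        rw [this, List.isChain_split]
        exact ⟨h₁, h2'⟩
    · omega
  have hconn : ∀ v ∈ c, Relation.ReflTransGen (fun a b => E a b ∧ a ∈ c ∧ b ∈ c) v x := by
    intro v hv
    by_cases hv1 : v ∈ x :: (l₁ ++ [y])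
    · exact reflTransGen_of_isChain (C := fun v => v ∈ c) hsymm _ x h₁ (by simp [hcdef]; grind) v hv1
    · exact reflTransGen_of_isChain (C := fun v => v ∈ c) hsymm _ x h₂ (by simp [hcdef]; grind) v
        (by simp [hcdef] at hv hv1 ⊢; tauto)
  have hcsymm : ∀ a b, (E a b ∧ a ∈ c ∧ b ∈ c) → (E b a ∧ b ∈ c ∧ a ∈ c) :=
    fun a b h => ⟨hsymm _ _ h.1, h.2.2, h.2.1⟩
  have hgap := length_le_countP_mul (fun v => decide (v ∈ c)) (ℓ - 1) l.length x l le_rfl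
    (by simp [hcdef]) (by rw [hy]; simp [hcdef]) (by
      intro u s w hinf hu hw hs
      simp only [decide_eq_true_eq] at hu hw hs
      by_cases hs0 : s = []
      · simp [hs0]
      have hns := hn.sublist hinf.sublist
      have hcs : List.IsChain E (u :: s ++ [w]) := by
        obtain ⟨p, q, e⟩ := hinf
        rw [← e] at hc
        exact hc.left_of_append.right_of_append
      have huw : Relation.ReflTransGen (fun a b => E a b ∧ a ∈ c ∧ b ∈ c) u w :=
        (hconn u hu).trans (reflTransGen_symm hcsymm (hconn w hw))
      obtain ⟨w', q, hw', hhead, hlast, hqc, hqn, hqQ, -⟩ :=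
        exists_path_to_set (S := fun v => v = w) (Q := fun v => v ∈ c) hcsymm
          (fun _ _ h => h.2.1) rfl hw huw
      subst hw'
      obtain ⟨q', rfl⟩ := List.getLast?_eq_some_iff.1 hlast
      have huw' : u ≠ w' := by rintro rfl; simp at hns
      obtain ⟨a, rfl⟩ : ∃ a, q' = w' :: a := by
        cases q' with
        | nil => simp at hhead; exact (huw' hhead).elim
        | cons b a => simp at hhead; exact ⟨a, by rw [hhead]⟩
      have hspos : 1 ≤ s.length := List.length_pos_iff.2 hs0
      have := hcyc u (s ++ w' :: a) ?_ ?_ ?_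
      · simp at this; omega
      · simp only [List.cons_append, List.nodup_cons, List.nodup_append, List.mem_append,
          List.mem_cons] at hns hqn hqQ ⊢
        grind
      · have e : u :: (s ++ w' :: a) ++ [u] = (u :: s) ++ w' :: (a ++ [u]) := by simp
        rw [e, List.isChain_split]
        exact ⟨hcs, hqc.imp fun _ _ h => h.1⟩
      · simp; omega)
  have hcount : (x :: l).countP (fun v => decide (v ∈ c)) ≤ c.length := by
    rw [List.countP_eq_length_filter]
    refine (List.subperm_of_subset (hn.filter _) fun v hv => ?_).length_le
    simpa using (List.mem_filter.1 hv).2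
  have : ℓ - 1 + 1 = ℓ := by omega
  rw [this] at hgap
  exact hgap.trans (Nat.mul_le_mul_right _ (hcount.trans hclen.le))

/-- In a digraph all of whose endomorphisms are surjective, if all paths from `r` avoiding the
vertices `xs` have at most `p` vertices, then the component of `r` avoiding `xs` is bounded. -/
theorem exists_component_bound (p : ℕ) : ∀ m : ℕ, ∃ B : ℕ,
    ∀ (V : Type) [Finite V] (A : V → V → Prop),
      (∀ f : V → V, (∀ a b, A a b → A (f a) (f b)) → Function.Surjective f) →
      ∀ (xs : Fin m → V) (r : V), r ∉ Set.range xs →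
      (∀ l : List V, (r :: l).Nodup → List.IsChain (fun a b => A a b ∨ A b a) (r :: l) →
        (∀ v ∈ r :: l, v ∉ Set.range xs) → (r :: l).length ≤ p) →
      {v | Relation.ReflTransGen
        (fun a b => (A a b ∨ A b a) ∧ a ∉ Set.range xs ∧ b ∉ Set.range xs) r v}.ncard ≤ B := by
  classical
  induction p with
  | zero =>
    intro m
    refine ⟨0, fun V _ A _ xs r hr h => ?_⟩
    have := h [] (by simp) (by simp) (by simpa using hr)
    simp at this
  | succ p ih =>
    intro m
    obtain ⟨B, hB⟩ := ih (m + 1)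
    refine ⟨1 + Nat.card (((Fin B → Fin B → Prop) × (Fin B → Fin (m + 1) → Prop) ×
      (Fin B → Fin (m + 1) → Prop)) × Fin B), fun V _ A hcore xs r hr h => ?_⟩
    set X : Fin (m + 1) → V := Fin.cons r xs with hX
    have hXr : Set.range X = insert r (Set.range xs) := Fin.range_cons r xs
    set R := fun a b => (A a b ∨ A b a) ∧ a ∉ Set.range X ∧ b ∉ Set.range X with hR
    set K : V → Set V := fun r' => {v | Relation.ReflTransGen R r' v} with hK
    have hRsymm : ∀ a b, R a b → R b a := fun a b hab => ⟨hab.1.symm, hab.2.2, hab.2.1⟩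
    have hKX : ∀ r', r' ∉ Set.range X → ∀ v ∈ K r', v ∉ Set.range X := by
      intro r' hr' v hv
      rcases Relation.ReflTransGen.cases_tail hv with rfl | ⟨b, _, hb⟩
      exacts [hr', hb.2.2]
    set I := {r' : V // (A r r' ∨ A r' r) ∧ r' ∉ Set.range X} with hI
    have hcard : ∀ i : I, (K i.1).ncard ≤ B := by
      rintro ⟨r', hrr', hr'⟩
      refine hB V A hcore X r' hr' fun l hn hc hav => ?_
      have := h (r' :: l) ?_ ?_ ?_
      · simpa using this
      · rw [List.nodup_cons]
        refine ⟨fun hmem => hav r hmem (by rw [hXr]; exact Set.mem_insert _ _), hn⟩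
      · rw [List.isChain_cons_cons]
        exact ⟨hrr', hc⟩
      · intro v hv
        rcases List.mem_cons.1 hv with rfl | hv
        · exact hr
        · exact fun hx => hav v hv (by rw [hXr]; exact Set.mem_insert_of_mem _ hx)
    have henum : ∀ i : I, ∃ e : Fin B → V, Set.range e = K i.1 := by
      intro i
      have hpos : 0 < (K i.1).ncard :=
        (Set.ncard_pos).2 ⟨i.1, Relation.ReflTransGen.refl⟩
      have eqv : Fin (K i.1).ncard ≃ K i.1 := (Finite.equivFin (K i.1)).symm
      have : NeZero (K i.1).ncard := ⟨hpos.ne'⟩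
      refine ⟨fun j => (eqv (Fin.ofNat _ j.1)).1, ?_⟩
      ext v
      constructor
      · rintro ⟨j, rfl⟩; exact (eqv _).2
      · intro hv
        refine ⟨⟨(eqv.symm ⟨v, hv⟩).1, (eqv.symm ⟨v, hv⟩).2.trans_le (hcard i)⟩, ?_⟩
        simp
    choose e he using henum
    set τ : I → (Fin B → Fin B → Prop) × (Fin B → Fin (m + 1) → Prop) ×
      (Fin B → Fin (m + 1) → Prop) := fun i =>
      (fun a b => A (e i a) (e i b), fun a b => A (e i a) (X b), fun a b => A (X b) (e i a)) with hτ
    have hfold : ∀ i j, τ i = τ j → K i.1 = K j.1 := by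
      intro i j hij
      by_cases hmem : i.1 ∈ K j.1
      · ext v
        exact ⟨fun hv => Relation.ReflTransGen.trans hmem hv, fun hv =>
          Relation.ReflTransGen.trans (reflTransGen_symm hRsymm hmem) hv⟩
      exfalso
      simp only [hτ, Prod.mk.injEq, funext_iff, eq_iff_iff] at hij
      obtain ⟨t1, t2, t3⟩ := hij
      have hidx : ∀ v, ∃ a, v ∈ K i.1 → e i a = v := by
        intro v
        by_cases hv : v ∈ K i.1
        · rw [← he i] at hv
          obtain ⟨a, ha⟩ := hv
          exact ⟨a, fun _ => ha⟩
        · have h0 : i.1 ∈ K i.1 := Relation.ReflTransGen.refl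
          rw [← he i] at h0
          exact ⟨h0.choose, fun h => (hv h).elim⟩
      choose a ha using hidx
      have hout : ∀ v w, v ∈ K i.1 → (A v w ∨ A w v) → w ∉ K i.1 → ∃ b, X b = w := by
        intro v w hv hvw hw
        by_contra hcon
        exact hw (Relation.ReflTransGen.tail hv ⟨hvw, hKX _ i.2.2 v hv, hcon⟩)
      obtain ⟨v, hv⟩ := hcore (fun v => if v ∈ K i.1 then e j (a v) else v) (by
        intro v w hvw
        by_cases hv : v ∈ K i.1 <;> by_cases hw : w ∈ K i.1 <;> simp only [hv, hw, if_true, if_false]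
        · rw [← t1, ha v hv, ha w hw]; exact hvw
        · obtain ⟨b, rfl⟩ := hout v w hv (.inl hvw) hw
          rw [← t2, ha v hv]; exact hvw
        · obtain ⟨b, rfl⟩ := hout w v hw (.inr hvw) hv
          rw [← t3, ha w hw]; exact hvw
        · exact hvw) i.1
      by_cases hvK : v ∈ K i.1
      · simp only [hvK, if_true] at hv
        exact hmem (hv ▸ he j ▸ Set.mem_range_self _)
      · simp only [hvK, if_false] at hv
        exact hvK (hv ▸ Relation.ReflTransGen.refl)
    set g : ((Fin B → Fin B → Prop) × (Fin B → Fin (m + 1) → Prop) ×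
      (Fin B → Fin (m + 1) → Prop)) × Fin B → V := fun t =>
      if ht : ∃ i, τ i = t.1 then e ht.choose t.2 else r with hg
    have hsub : {v | Relation.ReflTransGen
        (fun a b => (A a b ∨ A b a) ∧ a ∉ Set.range xs ∧ b ∉ Set.range xs) r v} ⊆
        insert r (Set.range g) := by
      have hcover : ∀ v, Relation.ReflTransGen
          (fun a b => (A a b ∨ A b a) ∧ a ∉ Set.range xs ∧ b ∉ Set.range xs) r v →
          v = r ∨ ∃ i : I, v ∈ K i.1 := by
        intro v hv
        induction hv with
        | refl => exact .inl rfl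
        | @tail b c _ hbc ih =>
          by_cases hcr : c = r
          · exact .inl hcr
          have hcX : c ∉ Set.range X := by rw [hXr]; simp only [Set.mem_insert_iff]; tauto
          rcases ih with rfl | ⟨i, hi⟩
          · exact .inr ⟨⟨c, hbc.1, hcX⟩, Relation.ReflTransGen.refl⟩
          · exact .inr ⟨i, Relation.ReflTransGen.tail hi ⟨hbc.1, hKX _ i.2.2 b hi, hcX⟩⟩
      intro v hv
      rcases hcover v hv with rfl | ⟨i, hi⟩
      · exact Set.mem_insert _ _
      · right
        have hex : ∃ j, τ j = τ i := ⟨i, rfl⟩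
        rw [← hfold _ _ hex.choose_spec, ← he] at hi
        obtain ⟨b, hb⟩ := hi
        exact ⟨(τ i, b), by simp only [hg, dif_pos hex]; exact hb⟩
    refine (Set.ncard_le_ncard hsub (Set.toFinite _)).trans ((Set.ncard_insert_le _ _).trans ?_)
    have := Finite.card_range_le g
    rw [Nat.card_coe_set_eq] at this
    omega

/-- For fixed `k ≥ 2` and `ℓ ≥ 3`, there are only finitely many `k`-dicritical digraphs
with no oriented cycle on at least `ℓ` vertices: their number of vertices is bounded. -/
theorem stmt2 (k ℓ : ℕ) (hk : 2 ≤ k) (hl : 3 ≤ ℓ) :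
    ∃ N : ℕ, ∀ (n : ℕ) (A : Fin n → Fin n → Prop), (∀ v, ¬ A v v) →
      Dicritical A Set.univ k →
      (∀ v l', IsOrientedCycle A v l' → (v :: l').length < ℓ) →
      n ≤ N := by
  obtain ⟨B, hB⟩ := exists_component_bound (ℓ * ℓ) 1
  refine ⟨B + 1, fun n A hA hD hcyc => ?_⟩
  rcases Nat.lt_or_ge n 2 with hn | hn
  · omega
  have hcut := fun x y z hx hz => hD.reflTransGen_avoiding (x := x) (y := y) (z := z) hx hz
  set y : Fin n := ⟨0, by omega⟩
  set r : Fin n := ⟨1, by omega⟩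
  have hry : r ≠ y := by simp [r, y]
  have hmem : ∀ v, v ∈ Set.range (fun _ : Fin 1 => y) ↔ v = y := by
    intro v; simp
  have hb := hB (Fin n) A hD.surjective_of_hom (fun _ => y) r (by rw [hmem]; exact hry)
    fun l hln hc _ => path_length_le (E := fun a b => A a b ∨ A b a) hl (fun _ _ h => h.symm)
      (fun a h => hA a (h.elim id id)) hcut (fun v l h1 h2 h3 => hcyc v l ⟨h1, h2, h3⟩) r l hln hc
  simp only [hmem] at hb
  have hsub : (Set.univ : Set (Fin n)) ⊆ insert y {v | Relation.ReflTransGen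
      (fun a b => (A a b ∨ A b a) ∧ ¬ a = y ∧ ¬ b = y) r v} := by
    intro v _
    by_cases hv : v = y
    · exact .inl hv
    · exact .inr (hcut v y r hv hry)
  have h1 := Set.ncard_le_ncard hsub (Set.toFinite _)
  rw [Set.ncard_univ, Nat.card_eq_fintype_card, Fintype.card_fin] at h1
  exact h1.trans ((Set.ncard_insert_le _ _).trans (by omega))
end

section
/- Let k ≥ 1 and let F be a digraph with at least one vertex. If F* is obtained from F by subdividing every arc at most k−1 times, then every digraph D with digirth at least k and dichromatic number at least (4^{m(F)+1}·n(F) − 1)/3 contains a subdivision of F*, where n(F) and m(F) are the number of vertices and arcs of F. -/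
/-- The digraph `A` contains a subdivision of `B` in which, for every arc `(u,v)` of `B`,
the directed path replacing `(u,v)` has at least `s u v` internal vertices. Equivalently,
`A` contains a subdivision of the digraph obtained from `B` by subdividing each arc
`(u,v)` exactly `s u v` times. -/
def ContainsSubdivisionGE {W V : Type} (B : W → W → Prop) (s : W → W → ℕ)
    (A : V → V → Prop) : Prop :=
  ∃ (f : W → V) (p : W → W → List V),
    Function.Injective f ∧
    (∀ u v, B u v → List.Chain A (f u) (p u v ++ [f v])) ∧
    (∀ u v, B u v → (f u :: (p u v ++ [f v])).Nodup) ∧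
    (∀ u v, B u v → ∀ x ∈ p u v, ∀ w : W, x ≠ f w) ∧
    (∀ u v u' v', B u v → B u' v' → (u, v) ≠ (u', v') → ∀ x ∈ p u v, x ∉ p u' v') ∧
    (∀ u v, B u v → s u v ≤ (p u v).length)

/-- The dichromatic number of the digraph `A`. -/
noncomputable def dichromaticNumber {V : Type} (A : V → V → Prop) : ℕ :=
  sInf {k | DicolorableOn A Set.univ k}

/-- `A[T]` has a colouring with colours `0, …, c - 1` and no monochromatic directed cycle.
Unlike `DicolorableOn`, colours outside `T` are unconstrained, so `∅` is `0`-dicolourable. -/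
def HasDicoloring {V : Type} (A : V → V → Prop) (T : Set V) (c : ℕ) : Prop :=
  ∃ φ : V → ℕ, (∀ x ∈ T, φ x < c) ∧
    ∀ v l, IsCycleOn A T v l → ¬ (∀ x ∈ v :: l, φ x = φ v)

section Cycles

variable {V : Type} {A : V → V → Prop} {S T : Set V} {v x : V} {l : List V}

theorem IsCycleOn.mono (h : IsCycleOn A S v l) (hT : ∀ x ∈ v :: l, x ∈ T) :
    IsCycleOn A T v l :=
  ⟨hT, h.2⟩

theorem IsCycleOn.ne_nil (hirr : ∀ v, ¬ A v v) (h : IsCycleOn A T v l) : l ≠ [] := by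
  rintro rfl
  have hc : List.IsChain A [v, v] := h.2.2
  exact hirr v (by simpa using hc)

theorem IsCycleOn.rotate (h : IsCycleOn A T v l) (hx : x ∈ v :: l) :
    ∃ l', IsCycleOn A T x l' := by
  obtain ⟨hT, hnd, hc⟩ := h
  rcases List.mem_cons.1 hx with rfl | hx
  · exact ⟨l, hT, hnd, hc⟩
  obtain ⟨a, b, rfl⟩ := List.append_of_mem hx
  have hperm : (x :: (b ++ v :: a)).Perm (v :: (a ++ x :: b)) := by
    rw [← List.cons_append, ← List.cons_append]
    exact List.perm_append_comm
  refine ⟨b ++ v :: a, fun y hy => hT y (hperm.mem_iff.1 hy), hperm.nodup_iff.2 hnd, ?_⟩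
  have hc' : List.IsChain A (v :: (a ++ x :: (b ++ [v]))) := by
    simpa [List.Chain] using hc
  obtain ⟨h₁, h₂⟩ := List.isChain_cons_split.1 hc'
  have : List.IsChain A (x :: (b ++ v :: (a ++ [x]))) := List.isChain_cons_split.2 ⟨h₂, h₁⟩
  simpa [List.Chain] using this

/-- A preorder containing the arcs of a directed cycle relates any two of its vertices. -/
theorem IsCycleOn.rel (h : IsCycleOn A T v l) {R : V → V → Prop} (hrefl : ∀ a, R a a)
    (htrans : ∀ a b c, R a b → R b c → R a c)
    (hR : ∀ a b, a ∈ T → b ∈ T → A a b → R a b) (hx : x ∈ v :: l) : R v x ∧ R x v := by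
  obtain ⟨hT, -, hc⟩ := h
  have hc' : List.IsChain R (v :: (l ++ [v])) := by
    refine List.IsChain.imp_of_mem_imp (fun a b ha hb hab => hR a b ?_ ?_ hab) hc
    · exact hT a (by simpa [or_comm, or_assoc] using ha)
    · exact hT b (by simpa [or_comm, or_assoc] using hb)
  rcases List.mem_cons.1 hx with rfl | hx
  · exact ⟨hrefl _, hrefl _⟩
  have : Trans R R R := ⟨fun {a b c} => htrans a b c⟩
  have hp := hc'.pairwise
  rw [List.pairwise_cons, List.pairwise_append] at hp
  exact ⟨hp.1 x (by simp [hx]), hp.2.2.2 x hx v (by simp)⟩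

end Cycles

section Dicoloring

variable {V : Type} {A : V → V → Prop} {S T : Set V} {a b c : ℕ}

theorem HasDicoloring.mono (h : HasDicoloring A T a) (hST : S ⊆ T) (hab : a ≤ b) :
    HasDicoloring A S b := by
  obtain ⟨φ, h₁, h₂⟩ := h
  exact ⟨φ, fun x hx => (h₁ x (hST hx)).trans_le hab,
    fun v l hc => h₂ v l (hc.mono fun x hx => hST (hc.1 x hx))⟩

theorem DicolorableOn.of_hasDicoloring_univ (h : HasDicoloring A Set.univ c) :
    DicolorableOn A Set.univ c := by
  obtain ⟨φ, h₁, h₂⟩ := h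
  refine ⟨fun x => ⟨φ x, h₁ x trivial⟩, fun v l hc hm => h₂ v l hc fun x hx => ?_⟩
  exact congrArg Fin.val (hm x hx)

theorem HasDicoloring.of_acyclic (h : ∀ v l, ¬ IsCycleOn A T v l) : HasDicoloring A T 1 :=
  ⟨fun _ => 0, fun _ _ => one_pos, fun v l hc => absurd hc (h v l)⟩

theorem HasDicoloring.union (hS : HasDicoloring A S a) (hT : HasDicoloring A T b) :
    HasDicoloring A (S ∪ T) (a + b) := by
  classical
  obtain ⟨φ, hφ, hφc⟩ := hS
  obtain ⟨ψ, hψ, hψc⟩ := hT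
  set χ : V → ℕ := fun x => if x ∈ S then φ x else a + ψ x with hχ
  refine ⟨χ, fun x hx => ?_, fun v l hc hm => ?_⟩
  · by_cases hxS : x ∈ S
    · have := hφ x hxS
      simp only [hχ, if_pos hxS]
      omega
    · have := hψ x (hx.resolve_left hxS)
      simp only [hχ, if_neg hxS]
      omega
  by_cases hv : v ∈ S
  · have hS : ∀ x ∈ v :: l, x ∈ S := by
      intro x hx
      by_contra hxS
      have h₁ := hm x hx
      have h₂ := hφ v hv
      simp only [hχ, if_pos hv, if_neg hxS] at h₁
      omega
    refine hφc v l (hc.mono hS) fun x hx => ?_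
    simpa [hχ, hv, hS x hx] using hm x hx
  · have hS : ∀ x ∈ v :: l, x ∉ S := by
      intro x hx hxS
      have h₁ := hm x hx
      have h₂ := hφ x hxS
      simp only [hχ, if_neg hv, if_pos hxS] at h₁
      omega
    refine hψc v l (hc.mono fun x hx => (hc.1 x hx).resolve_left (hS x hx)) fun x hx => ?_
    simpa [hχ, hv, hS x hx] using hm x hx

/-- Dicolourings of the fibres of a map that is constant along directed cycles glue. -/
theorem HasDicoloring.of_fibers {ι : Type} (g : V → ι)
    (hg : ∀ v l, IsCycleOn A T v l → ∀ x ∈ v :: l, g x = g v)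
    (h : ∀ i, HasDicoloring A (T ∩ {x | g x = i}) c) : HasDicoloring A T c := by
  choose φ hφ hφc using h
  refine ⟨fun x => φ (g x) x, fun x hx => hφ _ x ⟨hx, rfl⟩, fun v l hc hm => ?_⟩
  refine hφc (g v) v l (hc.mono fun x hx => ⟨hc.1 x hx, hg v l hc x hx⟩) fun x hx => ?_
  simpa [hg v l hc x hx] using hm x hx

/-- If arcs raise `d` by at most one, or all lower it by at most one, then a set that is not
`2c`-dicolourable has a level of `d` that is not `c`-dicolourable. -/
theorem exists_level_not_hasDicoloring (d : V → ℕ)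
    (hd : (∀ x y, x ∈ T → y ∈ T → A x y → d y ≤ d x + 1) ∨
      (∀ x y, x ∈ T → y ∈ T → A x y → d x ≤ d y + 1))
    (h : ¬ HasDicoloring A T (2 * c)) :
    ∃ i, ¬ HasDicoloring A (T ∩ {x | d x = i}) c := by
  by_contra! hall
  have parity : ∀ r, HasDicoloring A (T ∩ {x | d x % 2 = r}) c := by
    intro r
    refine .of_fibers d (fun v l hc x hx => ?_) fun i =>
      (hall i).mono (fun x hx => ⟨hx.1.1, hx.2⟩) le_rfl
    rcases hd with hd | hd
    · have := hc.rel (R := fun x y => d y ≤ d x) (fun _ => le_rfl)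
        (fun _ _ _ h₁ h₂ => le_trans h₂ h₁) (fun y z hy hz hyz => by
          have h₁ := hd y z hy.1 hz.1 hyz
          have h₂ : d y % 2 = r := hy.2
          have h₃ : d z % 2 = r := hz.2
          omega) hx
      exact le_antisymm this.1 this.2
    · have := hc.rel (R := fun x y => d x ≤ d y) (fun _ => le_rfl)
        (fun _ _ _ h₁ h₂ => le_trans h₁ h₂) (fun y z hy hz hyz => by
          have h₁ := hd y z hy.1 hz.1 hyz
          have h₂ : d y % 2 = r := hy.2
          have h₃ : d z % 2 = r := hz.2
          omega) hx
      exact le_antisymm this.2 this.1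
  refine h (((parity 0).union (parity 1)).mono (fun x hx => ?_) (by omega))
  rcases Nat.mod_two_eq_zero_or_one (d x) with h0 | h1
  · exact Or.inl ⟨hx, h0⟩
  · exact Or.inr ⟨hx, h1⟩

end Dicoloring

section Paths

open Relation

variable {V : Type} {A : V → V → Prop}

/-- Distance from `x`, described by the properties of breadth-first search layers. -/
theorem exists_distance (E : V → V → Prop) (x : V) :
    ∃ d : V → ℕ, (∀ a b, ReflTransGen E x a → E a b → d b ≤ d a + 1) ∧
      ∀ v, ReflTransGen E x v → ReflTransGen (fun a b => E a b ∧ d a < d v) x v := by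
  let reach : ℕ → V → Prop := Nat.rec (· = x) fun _ r v => ∃ u, r u ∧ E u v
  have hreach : ∀ v, ReflTransGen E x v → ∃ n, reach n v := by
    intro v hv
    induction hv with
    | refl => exact ⟨0, rfl⟩
    | tail _ hab ih =>
      obtain ⟨n, hn⟩ := ih
      exact ⟨n + 1, _, hn, hab⟩
  let d : V → ℕ := fun v => sInf {n | reach n v}
  have hd : ∀ v n, reach n v → d v ≤ n := fun v n hn => Nat.sInf_le hn
  have hmem : ∀ v n, reach n v → reach (d v) v := fun v n hn =>
    Nat.sInf_mem (s := {n | reach n v}) ⟨n, hn⟩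
  refine ⟨d, fun a b ha hab => ?_, ?_⟩
  · obtain ⟨n, hn⟩ := hreach a ha
    exact hd b _ ⟨a, hmem a n hn, hab⟩
  suffices ∀ n v, d v = n → reach n v → ReflTransGen (fun a b => E a b ∧ d a < d v) x v by
    intro v hv
    obtain ⟨n, hn⟩ := hreach v hv
    exact this _ v rfl (hmem v n hn)
  intro n
  induction n using Nat.strong_induction_on with
  | _ n ih =>
    intro v hvn hv
    cases n with
    | zero =>
      obtain rfl : v = x := hv
      exact .refl
    | succ n =>
      obtain ⟨u, hu, huv⟩ := hv
      have hlt : d u < d v := by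
        have := hd u n hu
        omega
      exact .tail (ReflTransGen.mono (fun a b hab => ⟨hab.1, hab.2.trans hlt⟩) _ _
        (ih (d u) (by omega) u rfl (hmem u n hu))) ⟨huv, hlt⟩

theorem exists_nodup_chain {u v : V} {q : List V} (h : List.IsChain A (u :: (q ++ [v]))) :
    ∃ q' : List V, List.IsChain A (u :: (q' ++ [v])) ∧ q'.Nodup ∧ ∀ x ∈ q', x ∈ q := by
  induction q generalizing u with
  | nil => exact ⟨[], h, List.nodup_nil, by simp⟩
  | cons y t ih =>
    rw [List.cons_append, List.isChain_cons_cons] at h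
    obtain ⟨q', hq', hnd, hsub⟩ := ih h.2
    by_cases hy : y ∈ q'
    · obtain ⟨a, b, rfl⟩ := List.append_of_mem hy
      refine ⟨y :: b, ?_, (List.nodup_append.1 hnd).2.1, fun x hx => ?_⟩
      · rw [List.append_assoc, List.cons_append, List.isChain_cons_split] at hq'
        exact List.isChain_cons_cons.2 ⟨h.1, hq'.2⟩
      · rcases List.mem_cons.1 hx with rfl | hx
        · simp
        · exact List.mem_cons_of_mem _ (hsub x (by simp [hx]))
    · exact ⟨y :: q', List.isChain_cons_cons.2 ⟨h.1, hq'⟩, List.nodup_cons.2 ⟨hy, hnd⟩,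
        fun x hx => by
          rcases List.mem_cons.1 hx with rfl | hx
          · simp
          · exact List.mem_cons_of_mem _ (hsub x hx)⟩

/-- A walk into `x` and a walk out of `x` that meet `H` only in their far ends give a path. -/
theorem exists_path_through {E : V → V → Prop} {H : Set V} {u v x : V} (hx : x ∉ H) (hv : v ∈ H)
    (hux : ReflTransGen (fun a b => E a b ∧ b ∉ H) u x)
    (hxv : ReflTransGen (fun a b => E a b ∧ a ∉ H) x v) :
    ∃ q : List V, List.IsChain E (u :: (q ++ [v])) ∧ q.Nodup ∧ ∀ y ∈ q, y ∉ H := by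
  let P : V → Prop := fun y => ∃ q : List V, List.IsChain E (y :: (q ++ [v])) ∧ ∀ z ∈ q, z ∉ H
  have hcons : ∀ a b, E a b → b ∉ H → P b → P a := by
    rintro a b hab hb ⟨q, hq, hqH⟩
    refine ⟨b :: q, List.isChain_cons_cons.2 ⟨hab, hq⟩, fun z hz => ?_⟩
    rcases List.mem_cons.1 hz with rfl | hz
    exacts [hb, hqH z hz]
  have hPx : ∀ y, ReflTransGen (fun a b => E a b ∧ a ∉ H) y v → y = v ∨ (P y ∧ y ∉ H) := by
    intro y hy
    induction hy using ReflTransGen.head_induction_on with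
    | refl => exact Or.inl rfl
    | head hab _ ih =>
      refine Or.inr ⟨?_, hab.2⟩
      rcases ih with rfl | ih
      · exact ⟨[], by simpa using hab.1, by simp⟩
      · exact hcons _ _ hab.1 ih.2 ih.1
  have hPu : P u := by
    induction hux using ReflTransGen.head_induction_on with
    | refl => exact ((hPx x hxv).resolve_left fun h => hx (h ▸ hv)).1
    | head hab _ ih => exact hcons _ _ hab.1 hab.2 ih
  obtain ⟨q, hq, hqH⟩ := hPu
  obtain ⟨q', hq', hnd, hsub⟩ := exists_nodup_chain hq
  exact ⟨q', hq', hnd, fun y hy => hqH y (hsub y hy)⟩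

/-- The key lemma of Aboulker et al.: a set that is not `4c`-dicolourable contains a set that is
not `c`-dicolourable and whose vertices are linked by paths with internal vertices outside it. -/
theorem exists_externally_linked {T : Set V} {c : ℕ} (h : ¬ HasDicoloring A T (4 * c)) :
    ∃ H ⊆ T, ¬ HasDicoloring A H c ∧ ∀ u ∈ H, ∀ v ∈ H, u ≠ v →
      ∃ q : List V, List.IsChain A (u :: (q ++ [v])) ∧ q.Nodup ∧ ∀ y ∈ q, y ∈ T ∧ y ∉ H := by
  let E : V → V → Prop := fun a b => A a b ∧ a ∈ T ∧ b ∈ T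
  let g : V → Set V := fun x => {y | ReflTransGen E x y ∧ ReflTransGen E y x}
  have hg : ∀ v l, IsCycleOn A T v l → ∀ x ∈ v :: l, g x = g v := by
    intro v l hc x hx
    obtain ⟨h₁, h₂⟩ := hc.rel (R := ReflTransGen E) (fun _ => .refl) (fun _ _ _ => .trans)
      (fun a b ha hb hab => .single ⟨hab, ha, hb⟩) hx
    ext y
    exact ⟨fun hy => ⟨h₁.trans hy.1, hy.2.trans h₂⟩, fun hy => ⟨h₂.trans hy.1, hy.2.trans h₁⟩⟩
  obtain ⟨i, hi⟩ : ∃ i, ¬ HasDicoloring A (T ∩ {x | g x = i}) (4 * c) := by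
    by_contra! hall
    exact h (.of_fibers g hg hall)
  set C := T ∩ {x | g x = i}
  obtain ⟨x, hxC⟩ : C.Nonempty := by
    rw [Set.nonempty_iff_ne_empty]
    intro hempty
    exact hi ⟨fun _ => 0, by simp [hempty], fun v l hc => by simpa [hempty] using hc.1 v⟩
  have hmut : ∀ v ∈ C, ReflTransGen E x v ∧ ReflTransGen E v x := by
    intro v hv
    have : v ∈ g v := ⟨.refl, .refl⟩
    rwa [show g v = g x from hv.2.trans hxC.2.symm] at this
  obtain ⟨d, hd, hdp⟩ := exists_distance E x
  obtain ⟨d', hd', hdp'⟩ := exists_distance (Function.swap E) x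
  obtain ⟨j, hj⟩ := exists_level_not_hasDicoloring (c := 2 * c) d
    (Or.inl fun a b ha hb hab => hd a b (hmut a ha).1 ⟨hab, ha.1, hb.1⟩)
    (by rwa [← mul_assoc])
  obtain ⟨j', hj'⟩ := exists_level_not_hasDicoloring (c := c) d'
    (Or.inr fun a b ha hb hab => hd' b a (reflTransGen_swap.2 (hmut b hb.1).2)
      ⟨hab, ha.1.1, hb.1.1⟩) hj
  refine ⟨_, fun y hy => hy.1.1.1, hj', fun u hu v hv huv => ?_⟩
  set H := (C ∩ {x | d x = j}) ∩ {x | d' x = j'}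
  have hout : ∀ w ∈ H, ReflTransGen (fun a b => E a b ∧ a ∉ H) x w := fun w hw =>
    ReflTransGen.mono (fun a b hab =>
      ⟨hab.1, fun ha => hab.2.ne (ha.1.2.trans hw.1.2.symm)⟩) _ _ (hdp w (hmut w hw.1.1).1)
  have hin : ReflTransGen (fun a b => E a b ∧ b ∉ H) u x := by
    refine reflTransGen_swap.1 (ReflTransGen.mono (fun a b hab => ?_) _ _
      (hdp' u (reflTransGen_swap.2 (hmut u hu.1.1).2)))
    exact ⟨hab.1, fun ha => hab.2.ne (ha.2.trans hu.2.symm)⟩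
  have hxH : x ∉ H := by
    intro hx
    have : ∀ w ∈ H, w = x := by
      intro w hw
      rcases (hout w hw).cases_head with h | ⟨_, h, -⟩
      exacts [h.symm, absurd hx h.2]
    exact huv ((this u hu).trans (this v hv).symm)
  obtain ⟨q, hq, hnd, hqH⟩ := exists_path_through hxH hv hin (hout v hv)
  refine ⟨q, hq.imp fun _ _ h => h.1, hnd, fun y hy => ⟨?_, hqH y hy⟩⟩
  obtain ⟨a, b, rfl⟩ := List.append_of_mem hy
  have hy' : List.IsChain E (y :: (b ++ [v])) := by
    rw [List.append_assoc, List.cons_append, List.isChain_cons_split] at hq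
    exact hq.2
  cases b with
  | nil => exact (List.isChain_cons_cons.1 hy').1.2.1
  | cons z b => exact (List.isChain_cons_cons.1 hy').1.2.1

/-- In a digraph of digirth at least `k`, a set that is not `4 (c + 1)`-dicolourable contains a
set that is not `c`-dicolourable and whose vertices are linked by paths with at least `k - 1`
internal vertices, all outside it. -/
theorem exists_externally_linked_long [Finite V] {k : ℕ} (hirr : ∀ v, ¬ A v v)
    (hgirth : ∀ v l, IsCycleOn A Set.univ v l → k ≤ (v :: l).length) {T : Set V} {c : ℕ}
    (h : ¬ HasDicoloring A T (4 * (c + 1))) :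
    ∃ H ⊆ T, ¬ HasDicoloring A H c ∧ ∀ u ∈ H, ∀ v ∈ H, u ≠ v →
      ∃ p : List V, List.IsChain A (u :: (p ++ [v])) ∧ (u :: (p ++ [v])).Nodup ∧
        (∀ y ∈ p, y ∈ T ∧ y ∉ H) ∧ k - 1 ≤ p.length := by
  obtain ⟨H, hHT, hH, hlink⟩ := exists_externally_linked h
  obtain ⟨S, ⟨hSH, hS⟩, hmax⟩ := exists_maximal_of_wellFoundedGT
    (fun S : Set V => S ⊆ H ∧ ∀ v l, ¬ IsCycleOn A S v l)
    ⟨∅, Set.empty_subset _, fun v l hc => by simpa using hc.1 v⟩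
  refine ⟨H \ S, Set.sdiff_subset.trans hHT, fun hcol => hH ?_, fun u hu v hv huv => ?_⟩
  · refine (hcol.union (.of_acyclic hS)).mono (fun x hx => ?_) le_rfl
    by_cases hxS : x ∈ S
    exacts [Or.inr hxS, Or.inl ⟨hx, hxS⟩]
  obtain ⟨l, hl⟩ : ∃ l, IsCycleOn A (insert u S) u l := by
    have hnot : ¬ ∀ w l, ¬ IsCycleOn A (insert u S) w l := fun hac =>
      hu.2 (hmax ⟨Set.insert_subset hu.1 hSH, hac⟩ (Set.subset_insert u S)
        (Set.mem_insert u S))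
    push Not at hnot
    obtain ⟨w, l, hc⟩ := hnot
    by_cases huc : u ∈ w :: l
    · exact hc.rotate huc
    · refine absurd (hc.mono fun y hy => ?_) (hS w l)
      exact (hc.1 y hy).resolve_left fun h => huc (h ▸ hy)
  have hul : u ∉ l := (List.nodup_cons.1 hl.2.1).1
  have hlS : ∀ y ∈ l, y ∈ S := fun y hy =>
    (hl.1 y (List.mem_cons_of_mem _ hy)).resolve_left fun h => hul (h ▸ hy)
  obtain ⟨t, w, rfl⟩ := (List.eq_nil_or_concat' l).resolve_left (hl.ne_nil hirr)
  have hwS : w ∈ S := hlS w (by simp)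
  obtain ⟨q, hq, hqnd, hqH⟩ := hlink w (hSH hwS) v hv.1 fun h => hv.2 (h ▸ hwS)
  refine ⟨(t ++ [w]) ++ q, ?_, ?_, ?_, ?_⟩
  · have hc : List.IsChain A (u :: (t ++ [w] ++ [u])) := hl.2.2
    simp only [List.append_assoc, List.cons_append, List.nil_append] at hc ⊢
    exact List.isChain_cons_split.2 ⟨(List.isChain_cons_split.1 hc).1, hq⟩
  · have hlnd : (t ++ [w]).Nodup := (List.nodup_cons.1 hl.2.1).2
    have hvl : v ∉ t ++ [w] := fun h => hv.2 (hlS v h)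
    have hvq : v ∉ q := fun h => (hqH v h).2 hv.1
    have huq : u ∉ q := fun h => (hqH u h).2 hu.1
    refine List.nodup_cons.2 ⟨?_, List.nodup_append'.2 ⟨List.nodup_append'.2 ⟨hlnd, hqnd, ?_⟩,
      List.nodup_singleton v, ?_⟩⟩
    · simp only [List.mem_append] at hul ⊢
      rintro ((h | h) | h)
      exacts [hul h, huq h, huv (List.mem_singleton.1 h)]
    · exact fun y hy hyq => (hqH y hyq).2 (hSH (hlS y hy))
    · rw [List.disjoint_singleton, List.mem_append]
      exact not_or.2 ⟨hvl, hvq⟩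
  · intro y hy
    rcases List.mem_append.1 hy with hy | hy
    · exact ⟨hHT (hSH (hlS y hy)), fun h => h.2 (hlS y hy)⟩
    · exact ⟨(hqH y hy).1, fun h => (hqH y hy).2 h.1⟩
  · have := hgirth u _ (hl.mono fun _ _ => trivial)
    simp only [List.length_cons, List.length_append] at this ⊢
    omega

end Paths

section Subdivision

variable {V : Type} {A : V → V → Prop}

/-- Digraphs of digirth at least `k` that are not dicolourable with this many colours contain a
subdivision of each digraph with `n` vertices and `m` arcs in which every arc is subdivided at
least `k - 1` times. -/
def subdivisionBound (n : ℕ) : ℕ → ℕ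
  | 0 => n - 1
  | m + 1 => 4 * (subdivisionBound n m + 1)

theorem subdivisionBound_lt {n : ℕ} (hn : 1 ≤ n) (m : ℕ) :
    subdivisionBound n m < (4 ^ (m + 1) * n - 1) / 3 := by
  induction m with
  | zero =>
    simp only [subdivisionBound]
    omega
  | succ m ih =>
    have : 4 ^ (m + 1 + 1) * n = 4 * (4 ^ (m + 1) * n) := by ring
    rw [this, subdivisionBound]
    generalize 4 ^ (m + 1) * n = N at ih
    omega

theorem exists_injective_of_not_hasDicoloring [Finite V] (hirr : ∀ v, ¬ A v v) {n : ℕ}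
    {T : Set V} (h : ¬ HasDicoloring A T (n - 1)) :
    ∃ f : Fin n → V, Function.Injective f ∧ ∀ i, f i ∈ T := by
  classical
  by_cases hn : n ≤ T.ncard
  · rw [← Nat.card_coe_set_eq] at hn
    let e := Finite.equivFin T
    exact ⟨fun i => e.symm (Fin.castLE hn i), fun i j hij =>
      Fin.castLE_injective hn (e.symm.injective (Subtype.ext hij)), fun i => Subtype.mem _⟩
  refine absurd ?_ h
  rw [← Nat.card_coe_set_eq] at hn
  let e := Finite.equivFin T
  refine ⟨fun x => if hx : x ∈ T then e ⟨x, hx⟩ else 0, fun x hx => ?_, fun v l hc hm => ?_⟩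
  · have := (e ⟨x, hx⟩).2
    simp only [dif_pos hx]
    omega
  · obtain ⟨y, hy⟩ := List.exists_mem_of_ne_nil l (hc.ne_nil hirr)
    have hyT := hc.1 y (List.mem_cons_of_mem _ hy)
    have hvT := hc.1 v List.mem_cons_self
    have hyv := hm y (List.mem_cons_of_mem _ hy)
    simp only [dif_pos hyT, dif_pos hvT] at hyv
    have : y = v := congrArg Subtype.val (e.injective (Fin.ext hyv))
    exact (List.nodup_cons.1 hc.2.1).1 (this ▸ hy)

theorem exists_subdivision_of_not_hasDicoloring [Finite V] {k n : ℕ} (hirr : ∀ v, ¬ A v v)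
    (hgirth : ∀ v l, IsCycleOn A Set.univ v l → k ≤ (v :: l).length)
    (m : ℕ) (B : Fin n → Fin n → Prop) (hB : {q : Fin n × Fin n | B q.1 q.2}.ncard = m)
    (hirrB : ∀ v, ¬ B v v) (T : Set V) (h : ¬ HasDicoloring A T (subdivisionBound n m)) :
    ∃ (f : Fin n → V) (p : Fin n → Fin n → List V),
      Function.Injective f ∧ (∀ i, f i ∈ T) ∧
      (∀ u v, B u v → List.IsChain A (f u :: (p u v ++ [f v]))) ∧
      (∀ u v, B u v → (f u :: (p u v ++ [f v])).Nodup) ∧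
      (∀ u v, B u v → ∀ x ∈ p u v, x ∈ T ∧ ∀ w, x ≠ f w) ∧
      (∀ u v u' v', B u v → B u' v' → (u, v) ≠ (u', v') → ∀ x ∈ p u v, x ∉ p u' v') ∧
      (∀ u v, B u v → k - 1 ≤ (p u v).length) := by
  classical
  induction m generalizing B T with
  | zero =>
    obtain ⟨f, hf, hfT⟩ := exists_injective_of_not_hasDicoloring hirr h
    have hno : ∀ u v, ¬ B u v := fun u v huv => by
      have hmem : (u, v) ∈ {q : Fin n × Fin n | B q.1 q.2} := huv
      rw [(Set.ncard_eq_zero (Set.toFinite _)).1 hB] at hmem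
      exact hmem
    exact ⟨f, fun _ _ => [], hf, hfT, fun u v huv => absurd huv (hno u v),
      fun u v huv => absurd huv (hno u v), fun u v huv => absurd huv (hno u v),
      fun u v _ _ huv => absurd huv (hno u v), fun u v huv => absurd huv (hno u v)⟩
  | succ m ih =>
    obtain ⟨⟨a, b⟩, hab⟩ : {q : Fin n × Fin n | B q.1 q.2}.Nonempty :=
      Set.nonempty_of_ncard_ne_zero (by omega)
    obtain ⟨H, hHT, hH, hlink⟩ := exists_externally_linked_long hirr hgirth h
    have hset : {q : Fin n × Fin n | B q.1 q.2 ∧ q ≠ (a, b)} =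
        {q : Fin n × Fin n | B q.1 q.2} \ {(a, b)} := rfl
    obtain ⟨f, p, hf, hfH, hchain, hnd, hint, hdisj, hlen⟩ :=
      ih (fun u v => B u v ∧ (u, v) ≠ (a, b))
        (by rw [hset, Set.ncard_sdiff_singleton_of_mem hab, hB]; rfl)
        (fun v hv => hirrB v hv.1) H hH
    obtain ⟨P, hPchain, hPnd, hPint, hPlen⟩ := hlink (f a) (hfH a) (f b) (hfH b)
      fun h => hirrB a (by have := hf h; subst this; exact hab)
    refine ⟨f, fun u v => if (u, v) = (a, b) then P else p u v, hf, fun i => hHT (hfH i),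
      fun u v huv => ?_, fun u v huv => ?_, fun u v huv => ?_, fun u v u' v' huv huv' hne => ?_,
      fun u v huv => ?_⟩
    · by_cases he : (u, v) = (a, b)
      · obtain ⟨rfl, rfl⟩ := Prod.mk.inj he
        simpa using hPchain
      · simpa only [if_neg he] using hchain u v ⟨huv, he⟩
    · by_cases he : (u, v) = (a, b)
      · obtain ⟨rfl, rfl⟩ := Prod.mk.inj he
        simpa only [if_pos] using hPnd
      · simpa only [if_neg he] using hnd u v ⟨huv, he⟩
    · by_cases he : (u, v) = (a, b)
      · simp only [if_pos he]
        exact fun x hx => ⟨(hPint x hx).1, fun w h => (hPint x hx).2 (h ▸ hfH w)⟩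
      · simp only [if_neg he]
        exact fun x hx => ⟨hHT (hint u v ⟨huv, he⟩ x hx).1, (hint u v ⟨huv, he⟩ x hx).2⟩
    · by_cases he : (u, v) = (a, b) <;> by_cases he' : (u', v') = (a, b)
      · exact absurd (he.trans he'.symm) hne
      · simp only [if_pos he, if_neg he']
        exact fun x hx hx' => (hPint x hx).2 (hint u' v' ⟨huv', he'⟩ x hx').1
      · simp only [if_neg he, if_pos he']
        exact fun x hx hx' => (hPint x hx').2 (hint u v ⟨huv, he⟩ x hx).1
      · simp only [if_neg he, if_neg he']
        exact hdisj u v u' v' ⟨huv, he⟩ ⟨huv', he'⟩ hne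
    · by_cases he : (u, v) = (a, b)
      · simpa only [if_pos he] using hPlen
      · simpa only [if_neg he] using hlen u v ⟨huv, he⟩

end Subdivision

/-- Let `k ≥ 1` and let `F` be a nonempty digraph (on `Fin nF`, with `m` arcs). If `F*`
is obtained from `F` by subdividing every arc at most `k-1` times (arc `(u,v)` being
subdivided `s u v ≤ k-1` times), then every digraph `D` with digirth at least `k` (every
directed cycle has at least `k` vertices) and dichromatic number at least
`(4^{m+1}·nF − 1)/3` contains a subdivision of `F*`. -/
theorem stmt7 (k nF : ℕ) (hk : 1 ≤ k) (hF : 1 ≤ nF)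
    (BF : Fin nF → Fin nF → Prop) (hirrF : ∀ v, ¬ BF v v)
    (s : Fin nF → Fin nF → ℕ) (hs : ∀ u v, BF u v → s u v ≤ k - 1)
    {V : Type} [Fintype V] (A : V → V → Prop) (hirr : ∀ v, ¬ A v v)
    (hgirth : ∀ v l, IsCycleOn A Set.univ v l → k ≤ (v :: l).length)
    (hchi : (4 ^ (Nat.card {q : Fin nF × Fin nF // BF q.1 q.2} + 1) * nF - 1) / 3 ≤
      dichromaticNumber A) :
    ContainsSubdivisionGE BF s A := by
  have hcol : ¬ HasDicoloring A Set.univ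
      (subdivisionBound nF (Nat.card {q : Fin nF × Fin nF // BF q.1 q.2})) := fun h =>
    ((subdivisionBound_lt hF _).trans_le hchi).not_ge
      (Nat.sInf_le (DicolorableOn.of_hasDicoloring_univ h))
  obtain ⟨f, p, hf, -, hchain, hnd, hint, hdisj, hlen⟩ :=
    exists_subdivision_of_not_hasDicoloring hirr hgirth _ BF
      (Nat.card_coe_set_eq {q : Fin nF × Fin nF | BF q.1 q.2}).symm hirrF Set.univ hcol
  exact ⟨f, p, hf, hchain, hnd, fun u v huv x hx => (hint u v huv x hx).2, hdisj,
    fun u v huv => (hs u v huv).trans (hlen u v huv)⟩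
end

section
/- Let k ≥ 1 and let T be a bidirected tree. If T* is obtained from T by subdividing every arc at most k−1 times, then every digraph D with digirth at least 2k and dichromatic number at least n(T) contains a subdivision of T*. -/
/-- `f` and `p` describe a subdivision of `B` in `A`, all of whose vertices lie in `U` and in which
the path `p u v` replacing the arc `(u, v)` has at least `s u v` internal vertices. -/
structure IsSubdivisionIn {W V : Type} (B : W → W → Prop) (s : W → W → ℕ) (A : V → V → Prop)
    (U : Set V) (f : W → V) (p : W → W → List V) : Prop where
  injective : Function.Injective f
  mem : ∀ w, f w ∈ U
  chain : ∀ u v, B u v → List.IsChain A (f u :: (p u v ++ [f v]))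
  nodup : ∀ u v, B u v → (f u :: (p u v ++ [f v])).Nodup
  path_mem : ∀ u v, B u v → ∀ x ∈ p u v, x ∈ U
  path_ne : ∀ u v, B u v → ∀ x ∈ p u v, ∀ w, x ≠ f w
  disjoint : ∀ u v u' v', B u v → B u' v' → (u, v) ≠ (u', v') → ∀ x ∈ p u v, x ∉ p u' v'
  le_length : ∀ u v, B u v → s u v ≤ (p u v).length

/-- A directed cycle can be rotated so as to start at any of its vertices. -/
theorem IsCycleOn.exists_rotate {V : Type} {A : V → V → Prop} {s : Set V} {w v : V} {l : List V}
    (h : IsCycleOn A s w l) (hv : v ∈ w :: l) : ∃ l', IsCycleOn A s v l' := by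
  obtain ⟨a, b, hab⟩ := List.append_of_mem hv
  obtain ⟨hs, hn, hc⟩ := h
  change List.IsChain A (w :: (l ++ [w])) at hc
  rcases a with _ | ⟨w', a⟩
  · obtain ⟨rfl, rfl⟩ : w = v ∧ l = b := by simpa using hab
    exact ⟨l, hs, hn, hc⟩
  · obtain ⟨rfl, rfl⟩ : w = w' ∧ l = a ++ v :: b := by simpa using hab
    refine ⟨b ++ w :: a, fun x hx => hs x (by simp at hx ⊢; tauto), ?_, ?_⟩
    · refine (List.Perm.nodup_iff ?_).1 hn
      have := List.perm_append_comm (l₁ := w :: a) (l₂ := v :: b)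
      simpa using this
    · change List.IsChain A (v :: (b ++ w :: a ++ [v]))
      have e₁ : w :: (a ++ v :: b ++ [w]) = (w :: a) ++ v :: (b ++ [w]) := by simp
      have e₂ : v :: (b ++ w :: a ++ [v]) = (v :: b) ++ w :: (a ++ [v]) := by simp
      rw [e₁, List.isChain_split] at hc
      rw [e₂, List.isChain_split]
      exact ⟨by simpa using hc.2, by simpa using hc.1⟩

/-- A subdivision of a graph minus a leaf extends along a directed cycle that meets it only in the
image of the neighbour of the leaf. -/
theorem IsSubdivisionIn.exists_extend_leaf {W V : Type} {G : SimpleGraph W} {s : W → W → ℕ}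
    {A : V → V → Prop} {U X : Set V} {x : W} {y : ({x}ᶜ : Set W)} (hXU : X ⊆ U)
    (hxy : ∀ z, G.Adj x z ↔ z = y) {f' : ({x}ᶜ : Set W) → V}
    {p' : ({x}ᶜ : Set W) → ({x}ᶜ : Set W) → List V}
    (h : IsSubdivisionIn (G.induce {x}ᶜ).Adj (fun a b => s a b) A (U \ X) f' p')
    {u : V} {P Q : List V} (hn : (f' y :: (P ++ u :: Q)).Nodup)
    (hc : List.IsChain A (f' y :: (P ++ u :: Q ++ [f' y])))
    (hX : ∀ z ∈ P ++ u :: Q, z ∈ X) (hP : s y x ≤ P.length) (hQ : s x y ≤ Q.length) :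
    ∃ f p, IsSubdivisionIn G.Adj s A U f p := by
  classical
  obtain ⟨g, hgx, hg⟩ : ∃ g : W → V, g x = u ∧ ∀ w : ({x}ᶜ : Set W), g w = f' w :=
    ⟨fun w => if hw : w = x then u else f' ⟨w, hw⟩, by simp, fun w => by
      have : (w : W) ≠ x := w.2
      simp [this]⟩
  obtain ⟨q, hqx, hqy, hq⟩ : ∃ q : W → W → List V, (∀ b, q x b = Q) ∧ (∀ a, a ≠ x → q a x = P) ∧
      ∀ a b : ({x}ᶜ : Set W), q a b = p' a b :=
    ⟨fun a b => if ha : a = x then Q else if hb : b = x then P else p' ⟨a, ha⟩ ⟨b, hb⟩,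
      by simp, fun a ha => by simp [ha], fun a b => by
        have ha : (a : W) ≠ x := a.2
        have hb : (b : W) ≠ x := b.2
        simp [ha, hb]⟩
  obtain ⟨y, hyx⟩ := y
  have hyx' : y ≠ x := hyx
  rw [← hg] at hn hc
  simp only at hn hc hxy hP hQ
  have hQX : ∀ z ∈ Q, z ∈ X := fun z hz => hX z (by simp [hz])
  have hPX : ∀ z ∈ P, z ∈ X := fun z hz => hX z (by simp [hz])
  have huX : u ∈ X := hX u (by simp)
  have hgmem : ∀ w, w ≠ x → g w ∈ U \ X := fun w hw => by
    have := h.mem ⟨w, hw⟩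
    rwa [← hg] at this
  have hqmem : ∀ a b, a ≠ x → b ≠ x → G.Adj a b → ∀ z ∈ q a b, z ∈ U \ X :=
    fun a b ha hb hab z hz => h.path_mem ⟨a, ha⟩ ⟨b, hb⟩ hab z (by rwa [← hq])
  have hcases : ∀ a b, G.Adj a b →
      (a = x ∧ b = y) ∨ (a = y ∧ b = x) ∨ (a ≠ x ∧ b ≠ x) := by
    intro a b hab
    by_cases ha : a = x
    · subst ha; exact .inl ⟨rfl, (hxy b).1 hab⟩
    by_cases hb : b = x
    · subst hb; exact .inr (.inl ⟨(hxy a).1 hab.symm, rfl⟩)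
    exact .inr (.inr ⟨ha, hb⟩)
  have hc' : List.IsChain A (g y :: (P ++ [u])) ∧ List.IsChain A (u :: (Q ++ [g y])) := by
    have e : g y :: (P ++ u :: Q ++ [g y]) = (g y :: P) ++ u :: (Q ++ [g y]) := by simp
    rw [e, List.isChain_split] at hc
    simpa using hc
  refine ⟨g, q, ?_, ?_, ?_, ?_, ?_, ?_, ?_, ?_⟩
  · intro a b hab
    by_cases ha : a = x <;> by_cases hb : b = x
    · rw [ha, hb]
    · exact absurd huX (by rw [← hgx, ← ha, hab]; exact (hgmem b hb).2)
    · exact absurd huX (by rw [← hgx, ← hb, ← hab]; exact (hgmem a ha).2)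
    · have := hg ⟨a, ha⟩
      have := hg ⟨b, hb⟩
      exact congrArg Subtype.val (@h.injective ⟨a, ha⟩ ⟨b, hb⟩ (by simp_all))
  · intro w
    by_cases hw : w = x
    · rw [hw, hgx]; exact hXU huX
    · exact (hgmem w hw).1
  · intro a b hab
    rcases hcases a b hab with ⟨rfl, rfl⟩ | ⟨rfl, rfl⟩ | ⟨ha, hb⟩
    · rw [hqx, hgx]; exact hc'.2
    · rw [hqy _ hyx', hgx]; exact hc'.1
    · have := h.chain ⟨a, ha⟩ ⟨b, hb⟩ hab
      rwa [← hg, ← hg, ← hq] at this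
  · intro a b hab
    rcases hcases a b hab with ⟨rfl, rfl⟩ | ⟨rfl, rfl⟩ | ⟨ha, hb⟩
    · rw [hqx, hgx]; grind
    · rw [hqy _ hyx', hgx]; grind
    · have := h.nodup ⟨a, ha⟩ ⟨b, hb⟩ hab
      rwa [← hg, ← hg, ← hq] at this
  · intro a b hab z hz
    rcases hcases a b hab with ⟨rfl, rfl⟩ | ⟨rfl, rfl⟩ | ⟨ha, hb⟩
    · exact hXU (hQX z (by rwa [hqx] at hz))
    · exact hXU (hPX z (by rwa [hqy _ hyx'] at hz))
    · exact (hqmem a b ha hb hab z hz).1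
  · intro a b hab z hz w hzw
    have hu : z = u → False := by
      rintro rfl
      rcases hcases a b hab with ⟨rfl, rfl⟩ | ⟨rfl, rfl⟩ | ⟨ha, hb⟩
      · rw [hqx] at hz; grind
      · rw [hqy _ hyx'] at hz; grind
      · exact (hqmem a b ha hb hab z hz).2 huX
    by_cases hw : w = x
    · exact hu (by rw [hzw, hw, hgx])
    rcases hcases a b hab with ⟨rfl, rfl⟩ | ⟨rfl, rfl⟩ | ⟨ha, hb⟩
    · exact (hgmem w hw).2 (hzw ▸ hQX z (by rwa [hqx] at hz))
    · exact (hgmem w hw).2 (hzw ▸ hPX z (by rwa [hqy _ hyx'] at hz))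
    · exact h.path_ne ⟨a, ha⟩ ⟨b, hb⟩ hab z (by rwa [← hq]) ⟨w, hw⟩ (by rw [hzw, ← hg])
  · intro a b a' b' hab hab' hne z hz hz'
    rcases hcases a b hab with ⟨rfl, rfl⟩ | ⟨rfl, rfl⟩ | ⟨ha, hb⟩ <;>
      rcases hcases a' b' hab' with ⟨h₁, h₂⟩ | ⟨h₁, h₂⟩ | ⟨ha', hb'⟩
    · exact hne (by rw [h₁, h₂])
    · subst h₁; rw [hqx] at hz; rw [h₂, hqy _ hyx'] at hz'; grind
    · rw [hqx] at hz; exact (hqmem a' b' ha' hb' hab' z hz').2 (hQX z hz)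
    · rw [hqy _ hyx'] at hz; rw [h₁, hqx] at hz'; grind
    · exact hne (by rw [h₁, h₂])
    · rw [hqy _ hyx'] at hz; exact (hqmem a' b' ha' hb' hab' z hz').2 (hPX z hz)
    · rw [h₁, hqx] at hz'; exact (hqmem a b ha hb hab z hz).2 (hQX z hz')
    · rw [h₁, h₂, hqy _ hyx'] at hz'; exact (hqmem a b ha hb hab z hz).2 (hPX z hz')
    · exact h.disjoint ⟨a, ha⟩ ⟨b, hb⟩ ⟨a', ha'⟩ ⟨b', hb'⟩ hab hab'
        (by simpa [Subtype.ext_iff] using hne) z (by rwa [← hq]) (by rwa [← hq])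
  · intro a b hab
    rcases hcases a b hab with ⟨rfl, rfl⟩ | ⟨rfl, rfl⟩ | ⟨ha, hb⟩
    · rwa [hqx]
    · rwa [hqy _ hyx']
    · have := h.le_length ⟨a, ha⟩ ⟨b, hb⟩ hab
      rwa [← hq] at this

/-- If `D[U]` has no dicolouring with colours `0, …, m - 1`, then it contains the required
subdivision of every bidirected tree on `m + 1` vertices. -/
theorem exists_isSubdivisionIn_of_not_dicolorable {V : Type} [Finite V] {A : V → V → Prop} {k : ℕ}
    (hk : 1 ≤ k) (hgirth : ∀ v l, IsCycleOn A Set.univ v l → 2 * k ≤ (v :: l).length) (m : ℕ) :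
    ∀ {W : Type} [Fintype W] (G : SimpleGraph W), G.IsTree → Fintype.card W = m + 1 →
      ∀ s : W → W → ℕ, (∀ u v, G.Adj u v → s u v ≤ k - 1) → ∀ U : Set V,
      (¬ ∃ φ : V → ℕ, (∀ v ∈ U, φ v < m) ∧
        ∀ v l, IsCycleOn A U v l → ¬ ∀ x ∈ v :: l, φ x = φ v) →
      ∃ f p, IsSubdivisionIn G.Adj s A U f p := by
  classical
  induction m with
  | zero =>
    intro W _ G hG hW s hs U hU
    have hsub : Subsingleton W := Fintype.card_le_one_iff_subsingleton.1 hW.le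
    obtain ⟨u, hu⟩ : U.Nonempty := by
      by_contra hne
      rw [Set.not_nonempty_iff_eq_empty] at hne
      exact hU ⟨fun _ => 0, by simp [hne], fun v l h => absurd (h.1 v (by simp)) (by simp [hne])⟩
    have hadj : ∀ a b, ¬ G.Adj a b := fun a b hab => hab.ne (Subsingleton.elim _ _)
    exact ⟨fun _ => u, fun _ _ => [], fun _ _ _ => Subsingleton.elim _ _, fun _ => hu,
      fun a b hab => absurd hab (hadj a b), fun a b hab => absurd hab (hadj a b),
      fun a b hab => absurd hab (hadj a b), fun a b hab => absurd hab (hadj a b),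
      fun a b _ _ hab => absurd hab (hadj a b), fun a b hab => absurd hab (hadj a b)⟩
  | succ m ih =>
    intro W _ G hG hW s hs U hU
    obtain ⟨X, ⟨hXU, hXac⟩, hXmax⟩ := (Set.toFinite
      {X : Set V | X ⊆ U ∧ ∀ v l, ¬ IsCycleOn A X v l}).exists_maximal
      ⟨∅, Set.empty_subset _, fun v l h => h.1 v (by simp)⟩
    have hdiff : ¬ ∃ φ : V → ℕ, (∀ v ∈ U \ X, φ v < m) ∧
        ∀ v l, IsCycleOn A (U \ X) v l → ¬ ∀ x ∈ v :: l, φ x = φ v := by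
      rintro ⟨φ, hφ, hcyc⟩
      have key : ∀ z ∈ U, (if z ∈ X then m else φ z) = m ↔ z ∈ X := fun z hz => by
        by_cases hzX : z ∈ X
        · simp [hzX]
        · simpa [hzX] using (hφ z ⟨hz, hzX⟩).ne
      refine hU ⟨fun z => if z ∈ X then m else φ z, fun v hv => ?_, fun v l hl hmono => ?_⟩
      · by_cases hvX : v ∈ X
        · simp [hvX]
        · simpa [hvX] using (hφ v ⟨hv, hvX⟩).trans (Nat.lt_succ_self m)
      · beta_reduce at hmono
        have hvU := hl.1 v (by simp)
        by_cases hvX : v ∈ X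
        · refine hXac v l ⟨fun z hz => (key z (hl.1 z hz)).1 ?_, hl.2⟩
          rw [hmono z hz, if_pos hvX]
        · have hall : ∀ z ∈ v :: l, z ∉ X := fun z hz hzX => hvX <| (key v hvU).1 <| by
            rw [← hmono z hz, if_pos hzX]
          refine hcyc v l ⟨fun z hz => ⟨hl.1 z hz, hall z hz⟩, hl.2⟩ fun z hz => ?_
          have := hmono z hz
          rwa [if_neg (hall z hz), if_neg hvX] at this
    have : Nontrivial W := Fintype.one_lt_card_iff_nontrivial.1 (by omega)
    obtain ⟨x, hx⟩ := hG.exists_vert_degree_one_of_nontrivial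
    obtain ⟨y, hxy, hy⟩ := SimpleGraph.degree_eq_one_iff_existsUnique_adj.1 hx
    obtain ⟨f', p', h⟩ := ih (G.induce {x}ᶜ)
      ⟨hG.connected.induce_compl_singleton_of_degree_eq_one hx, hG.isAcyclic.induce _⟩
      (by rw [Fintype.card_compl_set]; simp [hW]) (fun a b => s a b) (fun a b hab => hs a b hab)
      (U \ X) hdiff
    have hyx : y ∈ ({x}ᶜ : Set W) := hxy.ne'
    set v := f' ⟨y, hyx⟩ with hv
    have hvmem : v ∈ U \ X := h.mem _
    obtain ⟨w, l, hwl⟩ : ∃ w l, IsCycleOn A (insert v X) w l := by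
      by_contra! hac
      exact hvmem.2 (hXmax ⟨Set.insert_subset hvmem.1 hXU, hac⟩ (Set.subset_insert v X)
        (Set.mem_insert v X))
    have hvwl : v ∈ w :: l := by
      by_contra hvn
      refine hXac w l ⟨fun z hz => ?_, hwl.2⟩
      rcases hwl.1 z hz with rfl | hzX
      · exact absurd hz hvn
      · exact hzX
    obtain ⟨l', hl'⟩ := hwl.exists_rotate hvwl
    have hlen : 2 * k ≤ l'.length + 1 := hgirth v l' ⟨fun _ _ => Set.mem_univ _, hl'.2⟩
    have hlt : k - 1 < l'.length := by omega
    have hsplit : l' = l'.take (k - 1) ++ l'[k - 1] :: l'.drop k := by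
      conv_lhs => rw [← List.take_append_drop (k - 1) l', List.drop_eq_getElem_cons hlt,
        Nat.sub_add_cancel hk]
    have hX : ∀ z ∈ l', z ∈ X := fun z hz => by
      rcases hl'.1 z (List.mem_cons_of_mem _ hz) with rfl | hzX
      · exact absurd hz (List.nodup_cons.1 hl'.2.1).1
      · exact hzX
    have hP : (l'.take (k - 1)).length = k - 1 := by simp; omega
    have hQ : k - 1 ≤ (l'.drop k).length := by simp; omega
    have hn := hl'.2.1
    have hc : List.IsChain A (v :: (l' ++ [v])) := hl'.2.2
    rw [hsplit] at hn hc hX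
    exact h.exists_extend_leaf (y := ⟨y, hyx⟩) hXU
      (fun z => ⟨hy z, fun hz => hz ▸ hxy⟩) hn hc hX
      ((hs _ _ hxy.symm).trans hP.ge) ((hs _ _ hxy).trans hQ)

/-- Let `k ≥ 1` and let `T` be a bidirected tree on `n` vertices (both arcs of each tree
edge, i.e. arc relation `G.Adj` for a tree `G`). If `T*` is obtained from `T` by
subdividing every arc at most `k-1` times (arc `(u,v)` subdivided `s u v ≤ k-1` times),
then every digraph `D` with digirth at least `2k` and dichromatic number at least `n`
contains a subdivision of `T*`. -/
theorem stmt8 (k n : ℕ) (hk : 1 ≤ k) (G : SimpleGraph (Fin n)) (hT : G.IsTree)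
    (s : Fin n → Fin n → ℕ) (hs : ∀ u v, G.Adj u v → s u v ≤ k - 1)
    {V : Type} [Fintype V] (A : V → V → Prop)
    (hgirth : ∀ v l, IsCycleOn A Set.univ v l → 2 * k ≤ (v :: l).length)
    (hchi : n ≤ dichromaticNumber A) :
    ContainsSubdivisionGE G.Adj s A := by
  obtain ⟨m, rfl⟩ : ∃ m, n = m + 1 :=
    Nat.exists_eq_succ_of_ne_zero (Fin.pos (hT.connected.nonempty.some)).ne'
  have hm : ¬ DicolorableOn A Set.univ m := Nat.notMem_of_lt_sInf hchi
  obtain ⟨f, p, h⟩ := exists_isSubdivisionIn_of_not_dicolorable hk hgirth m G hT (by simp) s hs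
    Set.univ (by
      rintro ⟨φ, hφ, hcyc⟩
      refine hm ⟨fun v => ⟨φ v, hφ v (Set.mem_univ v)⟩, fun v l hl hmono => hcyc v l hl ?_⟩
      simpa [Fin.ext_iff] using hmono)
  exact ⟨f, p, h.injective, h.chain, h.nodup, h.path_ne, h.disjoint, h.le_length⟩
end
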